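/- For all integers n ≥ 0 and k ≥ 0 one has (in ℤ): 2·D(n,k) = R(n,k) + (−1)^k·C(n−k+1,k) and 2·T(n,k) = R(n,k) − (−1)^k·C(n−k+1,k), where C denotes the binomial coefficient, interpreted as 0 when n−k+1 < k. -/

import Mathlib

/-!
Let `S n = ∑ sgn(π) X ^ des_B(π)` over the signed simsun permutations of rank `n`, where `sgn(π)` is
`(-1)` to the number of negative entries, and let `P n` be the part of the sum with `π(1) > 0` (with
`P 0 = 1`). The coefficient of `X ^ k` in `S n` is `D(n,k) - T(n,k)`, while `R = D + T`, so the
theorem says that this coefficient is `(-1)^k C(n+1-k,k)`.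

Every simsun permutation of rank `n + 1` arises uniquely by inserting `N = n + 1` or `-N` into the
word of a simsun permutation `π` of rank `n` without creating a double descent (`ins_bijective`,
`isSimsun_ins`). For a fixed word, the insertions with opposite signs nearly cancel: at a descent
`a > b`, both `a N b` and `a (-N) b` are allowed with the same number of descents, and at an ascent
`a < b`, the insertion `a N b` is allowed exactly when `a b (-N)` is, again with the same number of
descents. The survivors are `N` at the end, with weight `X ^ d`, and `-N` at the start when
`π(1) > 0`, with weight `-X ^ (d + 1)`; this is `sum_insert`, proved by induction on the word.
Likewise the insertions yielding a positive first entry add up to `X ^ d` (`sum_insert_pos`).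

Hence `S (n+1) = S n - X * P n` and `P (n+1) = S n`, which is the recurrence of the polynomials
`∑ (-1)^k C(n+1-k,k) X ^ k` by Pascal's rule (`coeff_SP`).
-/


open Finset

/-- A signed permutation of rank `n`, encoded as an (unsigned) permutation of
`Fin n` together with a choice of sign for each position: the entry
`π(i+1)` of the word is `±(σ(i)+1)` where the sign is `-` iff `sgn i = true`. -/
abbrev SignedPerm (n : ℕ) := Equiv.Perm (Fin n) × (Fin n → Bool)

/-- The entry `π(j+1)` of the word of a signed permutation. -/
def entry {n : ℕ} (π : SignedPerm n) (j : Fin n) : ℤ :=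
  (if π.2 j then -1 else 1) * (((π.1 j : ℕ) : ℤ) + 1)

/-- The word `π(0)π(1)⋯π(n)` of a signed permutation (with the leading `0`). -/
def word {n : ℕ} (π : SignedPerm n) : List ℤ :=
  0 :: List.ofFn (entry π)

/-- `π(i)` for `0 ≤ i ≤ n` (and `0` outside this range). -/
def wordFn {n : ℕ} (π : SignedPerm n) (i : ℕ) : ℤ :=
  if h : 1 ≤ i ∧ i ≤ n then entry π ⟨i - 1, by omega⟩ else 0

/-- A word has no double descent: no three consecutive strictly decreasing entries. -/
def noDD : List ℤ → Bool
  | a :: b :: c :: rest => (!(decide (b < a) && decide (c < b))) && noDD (b :: c :: rest)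
  | _ => true

/-- A signed permutation is simsun if for every `0 ≤ k ≤ n`, deleting the entries
`±n, …, ±(n-k+1)` (i.e. keeping the entries of absolute value `≤ m := n - k`) from the
word `π(0)π(1)⋯π(n)` leaves a word with no three consecutive strictly decreasing
entries. -/
def IsSimsun {n : ℕ} (π : SignedPerm n) : Prop :=
  ∀ m ≤ n, noDD ((word π).filter (fun a => a.natAbs ≤ m)) = true

instance {n : ℕ} : DecidablePred (IsSimsun (n := n)) := fun _ => by
  unfold IsSimsun; infer_instance

/-- The type-B descent number `des_B(π) = #{0 ≤ i ≤ n-1 : π(i) > π(i+1)}`. -/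
def desB {n : ℕ} (π : SignedPerm n) : ℕ :=
  ((Finset.range n).filter (fun i => wordFn π (i + 1) < wordFn π i)).card

/-- The set of signed simsun permutations of rank `n`. -/
def RB (n : ℕ) : Finset (SignedPerm n) := univ.filter IsSimsun

/-- Signed simsun permutations with `π(1) > 0` (for `n = 0`, the empty permutation
is included, following the convention `R⁺_0 = 1`). -/
def RBp (n : ℕ) : Finset (SignedPerm n) :=
  (RB n).filter (fun π => 0 < wordFn π 1 ∨ n = 0)

/-- Signed simsun permutations with `π(1) < 0`. -/
def RBm (n : ℕ) : Finset (SignedPerm n) :=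
  (RB n).filter (fun π => wordFn π 1 < 0)

/-- A signed permutation is even-signed if its word has an even number of negative entries. -/
def IsEvenSigned {n : ℕ} (π : SignedPerm n) : Prop :=
  (univ.filter (fun j => π.2 j = true)).card % 2 = 0

instance {n : ℕ} : DecidablePred (IsEvenSigned (n := n)) := fun _ => by
  unfold IsEvenSigned; infer_instance

def RD (n : ℕ) : Finset (SignedPerm n) := (RB n).filter IsEvenSigned
def RT (n : ℕ) : Finset (SignedPerm n) := (RB n).filter (fun π => ¬ IsEvenSigned π)
def RDp (n : ℕ) : Finset (SignedPerm n) := (RD n).filter (fun π => 0 < wordFn π 1 ∨ n = 0)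
def RDm (n : ℕ) : Finset (SignedPerm n) := (RD n).filter (fun π => wordFn π 1 < 0)
def RTp (n : ℕ) : Finset (SignedPerm n) := (RT n).filter (fun π => 0 < wordFn π 1 ∨ n = 0)
def RTm (n : ℕ) : Finset (SignedPerm n) := (RT n).filter (fun π => wordFn π 1 < 0)

/-- `R(n,k)`, as an integer, vanishing for `k < 0`. -/
def Rcnt (n : ℕ) (k : ℤ) : ℤ := ((RB n).filter (fun π => (desB π : ℤ) = k)).card
def Rpcnt (n : ℕ) (k : ℤ) : ℤ := ((RBp n).filter (fun π => (desB π : ℤ) = k)).card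
def Rmcnt (n : ℕ) (k : ℤ) : ℤ := ((RBm n).filter (fun π => (desB π : ℤ) = k)).card
def Dcnt (n : ℕ) (k : ℤ) : ℤ := ((RD n).filter (fun π => (desB π : ℤ) = k)).card
def Tcnt (n : ℕ) (k : ℤ) : ℤ := ((RT n).filter (fun π => (desB π : ℤ) = k)).card
def Dpcnt (n : ℕ) (k : ℤ) : ℤ := ((RDp n).filter (fun π => (desB π : ℤ) = k)).card
def Dmcnt (n : ℕ) (k : ℤ) : ℤ := ((RDm n).filter (fun π => (desB π : ℤ) = k)).card
def Tpcnt (n : ℕ) (k : ℤ) : ℤ := ((RTp n).filter (fun π => (desB π : ℤ) = k)).card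
def Tmcnt (n : ℕ) (k : ℤ) : ℤ := ((RTm n).filter (fun π => (desB π : ℤ) = k)).card

open Polynomial

/-! ### Inserting `±N` into a single word -/

/-- Descent number of a list: the number of adjacent pairs that strictly decrease. -/
def desL : List ℤ → ℕ
  | a :: b :: r => (if b < a then 1 else 0) + desL (b :: r)
  | _ => 0

/-- The weight `X ^ des` of a word without double descents; other words have weight `0`. -/
noncomputable def wt (w : List ℤ) : ℤ[X] := if noDD w = true then X ^ desL w else 0

theorem wt_cons_cons (a b : ℤ) (r : List ℤ) (h : a ≤ b) : wt (a :: b :: r) = wt (b :: r) := by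
  have h' : ¬ b < a := by omega
  cases r <;> simp [wt, noDD, desL, h']

theorem wt_desc (a b c : ℤ) (r : List ℤ) (h : b < a) (h2 : b ≤ c) :
    wt (a :: b :: c :: r) = X * wt (b :: c :: r) := by
  have h' : ¬ c < b := by omega
  simp only [wt, noDD, desL, h, h']
  simp
  split_ifs <;> ring

theorem wt_dd (a b c : ℤ) (r : List ℤ) (h : b < a) (h2 : c < b) :
    wt (a :: b :: c :: r) = 0 := by
  simp [wt, noDD, h, h2]

theorem wt_desc_single (a b : ℤ) (h : b < a) : wt [a, b] = X := by
  simp [wt, noDD, desL, h]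

theorem wt_single (a : ℤ) : wt [a] = 1 := by
  simp [wt, noDD, desL]

/-- Signed count of the insertions of `N` (sign `+`) and `-N` (sign `-`) into a word `a :: l`
without double descents, at any place after the first letter, where `N` exceeds all letters in
absolute value. Almost everything cancels: with `d` the number of descents, what is left is `X ^ d`
(from `N` at the very end) and, if the word does not start with a descent, `-X ^ (d + 1)`
(from `-N` right after `a`). -/
theorem sum_insert (N : ℤ) : ∀ (l : List ℤ) (a : ℤ), -N < a → a < N →
    (∀ b ∈ l, -N < b ∧ b < N) → noDD (a :: l) = true →
    ∑ p ∈ range (l.length + 1), (wt (a :: l.insertIdx p N) - wt (a :: l.insertIdx p (-N)))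
      = wt (a :: l) * (if l.headD a < a then 1 else 1 - X) := by
  intro l
  induction l with
  | nil =>
    intro a h1 h2 _ _
    simp [wt_cons_cons a N [] h2.le, wt_desc_single a (-N) h1, wt_single]
  | cons b l ih =>
    intro a h1 h2 hl hd
    obtain ⟨hb1, hb2⟩ := hl b (by simp)
    have hl' : ∀ c ∈ l, -N < c ∧ c < N := fun c hc => hl c (by simp [hc])
    have hd' : noDD (b :: l) = true := by
      cases l with
      | nil => simp [noDD]
      | cons c r => simp [noDD] at hd ⊢; exact hd.2
    have key := ih b hb1 hb2 hl' hd'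
    rw [List.length_cons, sum_range_succ']
    simp only [List.insertIdx_succ_cons, List.insertIdx_zero]
    rw [wt_cons_cons a N _ h2.le, wt_desc a (-N) b l h1 hb1.le, wt_cons_cons (-N) b _ hb1.le]
    by_cases hab : b < a
    -- Prefixing `a > b` forbids exactly one insertion into `b :: l`: that of `-N` right after `b`.
    · rw [if_pos (show (b :: l).headD a < a from hab)]
      have hsum : ∑ p ∈ range (l.length + 1),
          (wt (a :: b :: l.insertIdx p N) - wt (a :: b :: l.insertIdx p (-N)))
          = X * (∑ p ∈ range (l.length + 1),
            (wt (b :: l.insertIdx p N) - wt (b :: l.insertIdx p (-N))))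
            + X * wt (b :: -N :: l) := by
        rw [sum_range_succ', sum_range_succ']
        have hrest : ∀ p ∈ range l.length,
            wt (a :: b :: l.insertIdx (p + 1) N) - wt (a :: b :: l.insertIdx (p + 1) (-N))
            = X * (wt (b :: l.insertIdx (p + 1) N) - wt (b :: l.insertIdx (p + 1) (-N))) := by
          intro p _
          cases l with
          | nil => simp at *
          | cons c r =>
            have hbc : b ≤ c := by simp [noDD] at hd; omega
            simp only [List.insertIdx_succ_cons]
            rw [wt_desc _ _ _ _ hab hbc, wt_desc _ _ _ _ hab hbc, mul_sub]
        rw [sum_congr rfl hrest, ← mul_sum]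
        simp only [List.insertIdx_zero]
        rw [wt_desc a b N l hab hb2.le, wt_dd a b (-N) l hab hb1]
        ring
      rw [hsum, key]
      cases l with
      | nil =>
        simp [wt_desc_single _ _ hb1, wt_desc_single _ _ hab, wt_desc_single _ _ hb2, wt_single]
        ring
      | cons c r =>
        have hbc : b ≤ c := by simp [noDD] at hd; omega
        have hc := hl' c (by simp)
        rw [wt_desc N b c r hb2 hbc, wt_desc a b c r hab hbc, wt_desc b (-N) c r hb1 hc.1.le,
          wt_cons_cons (-N) c r hc.1.le, wt_cons_cons b c r hbc]
        simp [not_lt.mpr hbc]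
        ring
    · have hab' : a ≤ b := not_lt.mp hab
      rw [if_neg (show ¬ (b :: l).headD a < a from hab)]
      simp only [wt_cons_cons a b _ hab']
      rw [key]
      cases l with
      | nil => simp [wt_desc_single _ _ hb2, wt_single]
      | cons c r =>
        by_cases hbc : c < b
        · rw [wt_dd N b c r hb2 hbc]; simp [hbc]; ring
        · rw [wt_desc N b c r hb2 (not_lt.mp hbc)]; simp [hbc]

/-- The weight of the word `0 :: l` if it does not start with a descent, and `0` otherwise. The
empty `l` counts as not starting with a descent. -/
noncomputable def wtPos (l : List ℤ) : ℤ[X] := if 0 ≤ l.headD 0 then wt (0 :: l) else 0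

theorem wtPos_of_nonneg (b : ℤ) (r : List ℤ) (h : 0 ≤ b) : wtPos (b :: r) = wt (0 :: b :: r) :=
  if_pos h

theorem wtPos_of_neg (b : ℤ) (r : List ℤ) (h : b < 0) : wtPos (b :: r) = 0 :=
  if_neg (not_le.mpr h)

/-- The analogue of `sum_insert` for the insertions whose result does not start with a descent: only
`X ^ d` is left. -/
theorem sum_insert_pos (N : ℤ) (hN : 0 < N) (l : List ℤ)
    (hl : ∀ b ∈ l, -N < b ∧ b < N) (hd : noDD (0 :: l) = true) :
    ∑ p ∈ range (l.length + 1), (wtPos (l.insertIdx p N) - wtPos (l.insertIdx p (-N)))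
      = wt (0 :: l) := by
  have key := sum_insert N l 0 (by omega) hN hl hd
  rw [sum_range_succ'] at key ⊢
  have hN' : ¬ N ≤ 0 := by omega
  cases l with
  | nil => simp [wtPos, hN.le, hN', wt_cons_cons, wt_single]
  | cons b r =>
    obtain ⟨hb1, hb2⟩ := hl b (by simp)
    simp only [List.insertIdx_succ_cons, List.insertIdx_zero] at key ⊢
    rw [wtPos_of_nonneg N _ hN.le, wtPos_of_neg (-N) _ (by omega)]
    by_cases hb : b < 0
    · simp only [wtPos_of_neg b _ hb, sub_zero, sum_const_zero, zero_add]
      rw [wt_cons_cons 0 N _ hN.le]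
      cases r with
      | nil => rw [wt_desc_single _ _ hb2, wt_desc_single _ _ hb]
      | cons c r =>
        have hbc : b ≤ c := by simp [noDD] at hd; omega
        rw [wt_desc _ _ _ _ hb2 hbc, wt_desc _ _ _ _ hb hbc]
    · have hb' : 0 ≤ b := not_lt.mp hb
      simp only [wtPos_of_nonneg b _ hb']
      rw [if_neg (show ¬ (b :: r).headD 0 < 0 from hb), wt_desc 0 (-N) b r (by omega) hb1.le,
        wt_cons_cons (-N) b _ hb1.le, wt_cons_cons 0 b _ hb'] at key
      rw [wt_cons_cons 0 b _ hb', sub_zero]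
      linear_combination key

/-! ### Building rank `n + 1` from rank `n` -/

/-- The signed permutation of rank `n + 1` obtained from the triple `(π, p, s)` by inserting the
entry `±(n+1)`, negative iff `s`, at position `p` of the word of `π` (counted from `0`, the initial
letter `0` excluded). -/
def ins {n : ℕ} (x : SignedPerm n × Fin (n + 1) × Bool) : SignedPerm (n + 1) :=
  (((finSuccEquiv' x.2.1).trans (Equiv.optionCongr x.1.1)).trans finSuccEquivLast.symm,
    Fin.insertNth x.2.1 x.2.2 x.1.2)

theorem ins_fst_same {n : ℕ} (x : SignedPerm n × Fin (n + 1) × Bool) :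
    (ins x).1 x.2.1 = Fin.last n := by
  simp [ins]

theorem ins_fst_succAbove {n : ℕ} (x : SignedPerm n × Fin (n + 1) × Bool) (j : Fin n) :
    (ins x).1 (x.2.1.succAbove j) = (x.1.1 j).castSucc := by
  simp [ins]

theorem ins_injective {n : ℕ} : Function.Injective (ins (n := n)) := by
  intro x y h
  have hp : x.2.1 = y.2.1 := by
    apply (ins x).1.injective
    rw [ins_fst_same, h, ins_fst_same]
  obtain ⟨⟨σ, e⟩, p, s⟩ := x
  obtain ⟨⟨τ, f⟩, q, t⟩ := y
  simp only at hp
  subst hp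
  have h2 : (ins ((σ, e), p, s)).2 = (ins ((τ, f), p, t)).2 := by rw [h]
  simp only [ins] at h2
  obtain ⟨h3, h4⟩ := Fin.insertNth_injective2 h2
  have h5 : σ = τ := by
    ext j
    have a := ins_fst_succAbove ((σ, e), p, s) j
    have b := ins_fst_succAbove ((τ, f), p, t) j
    rw [h] at a
    simp only at a b
    have := a.symm.trans b
    simpa [Fin.ext_iff] using this
  rw [h3, h4, h5]

theorem ins_bijective {n : ℕ} : Function.Bijective (ins (n := n)) := by
  rw [Fintype.bijective_iff_injective_and_card]
  refine ⟨ins_injective, ?_⟩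
  simp [Fintype.card_perm, Nat.factorial_succ, pow_succ]
  ring

theorem ofFn_insertNth {α : Type*} : ∀ {n : ℕ} (p : Fin (n + 1)) (x : α) (f : Fin n → α),
    List.ofFn (Fin.insertNth (α := fun _ => α) p x f) = (List.ofFn f).insertIdx p x := by
  intro n
  induction n with
  | zero =>
    intro p x f
    obtain rfl : p = 0 := Fin.fin_one_eq_zero p
    simp
  | succ n ih =>
    intro p x f
    cases p using Fin.cases with
    | zero => simp [Fin.insertNth_zero']
    | succ p =>
      have := Fin.insertNth_succ_cons p x (f 0) (Fin.tail f)
      rw [Fin.cons_self_tail] at this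
      rw [this, List.ofFn_cons, ih, List.ofFn_succ (f := f)]
      simp only [Fin.val_succ, List.insertIdx_succ_cons]
      rfl

/-- The integer `±(n+1)`, negative iff `s`. -/
def sgnMax (n : ℕ) (s : Bool) : ℤ := if s then -(n + 1 : ℤ) else n + 1

theorem ofFn_entry_ins {n : ℕ} (π : SignedPerm n) (p : Fin (n + 1)) (s : Bool) :
    List.ofFn (entry (ins (π, p, s))) = (List.ofFn (entry π)).insertIdx p (sgnMax n s) := by
  rw [← ofFn_insertNth]
  congr 1
  symm
  rw [Fin.insertNth_eq_iff]
  constructor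
  · have := ins_fst_same (π, p, s)
    simp only at this
    simp only [entry, this]
    cases s <;> simp [ins, sgnMax]
  · funext j
    have := ins_fst_succAbove (π, p, s) j
    simp only at this
    simp only [entry, Fin.removeNth, this]
    simp [ins]

theorem filter_insertIdx {α : Type*} (q : α → Bool) (x : α) (hx : q x = false) :
    ∀ (l : List α) (p : ℕ), (l.insertIdx p x).filter q = l.filter q := by
  intro l
  induction l with
  | nil => intro p; cases p <;> simp [hx]
  | cons a l ih =>
    intro p
    cases p with
    | zero => simp [hx]
    | succ p => simp [List.filter_cons, ih]

theorem entry_bound {n : ℕ} (π : SignedPerm n) : ∀ b ∈ List.ofFn (entry π),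
    -(n + 1 : ℤ) < b ∧ b < n + 1 := by
  intro b hb
  obtain ⟨j, rfl⟩ := List.mem_ofFn.mp hb
  have := (π.1 j).isLt
  simp only [entry]
  split_ifs <;> constructor <;> omega

theorem filter_word {n : ℕ} (π : SignedPerm n) :
    (word π).filter (fun a => a.natAbs ≤ n) = word π := by
  rw [List.filter_eq_self]
  intro a ha
  rcases List.mem_cons.mp ha with rfl | h
  · simp
  · have := entry_bound π a h
    simp only [decide_eq_true_eq]
    omega

/-- Truncating the word of `ins (π, p, s)` at any level `m ≤ n` gives a truncation of the word of
`π`, so only the untruncated word yields a new condition. -/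
theorem isSimsun_ins {n : ℕ} (π : SignedPerm n) (p : Fin (n + 1)) (s : Bool) :
    IsSimsun (ins (π, p, s)) ↔ IsSimsun π ∧ noDD (word (ins (π, p, s))) = true := by
  have hf : ∀ m ≤ n, (word (ins (π, p, s))).filter (fun a => a.natAbs ≤ m) =
      (word π).filter (fun a => a.natAbs ≤ m) := by
    intro m hm
    simp only [word, ofFn_entry_ins, List.filter_cons]
    rw [filter_insertIdx]
    cases s <;> simp [sgnMax] <;> omega
  constructor
  · intro h
    refine ⟨fun m hm => ?_, ?_⟩
    · rw [← hf m hm]; exact h m (by omega)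
    · have := h (n + 1) le_rfl
      rwa [filter_word] at this
  · rintro ⟨h1, h2⟩ m hm
    rcases Nat.lt_or_ge n m with h | h
    · obtain rfl : m = n + 1 := by omega
      rwa [filter_word]
    · rw [hf m h]; exact h1 m h

/-- The sign `(-1)^(number of negative entries)`. -/
def sgn {n : ℕ} (π : SignedPerm n) : ℤ := ∏ j, if π.2 j then -1 else 1

theorem sgn_ins {n : ℕ} (π : SignedPerm n) (p : Fin (n + 1)) (s : Bool) :
    sgn (ins (π, p, s)) = (if s then -1 else 1) * sgn π := by
  simp only [sgn]
  rw [Fin.prod_univ_succAbove _ p]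
  simp [ins]

theorem noDD_word {n : ℕ} {π : SignedPerm n} (h : IsSimsun π) : noDD (word π) = true := by
  have := h n le_rfl
  rwa [filter_word] at this

/-! ### The signed descent polynomials -/

/-- The signed descent polynomial `∑ sgn(π) X ^ des_B(π)` over signed simsun permutations `π` of
rank `n`. -/
noncomputable def S (n : ℕ) : ℤ[X] :=
  ∑ π : SignedPerm n, if IsSimsun π then C (sgn π) * wt (word π) else 0

/-- The part of `S n` coming from permutations with `π(1) > 0` (or `n = 0`). -/
noncomputable def P (n : ℕ) : ℤ[X] :=
  ∑ π : SignedPerm n, if IsSimsun π then C (sgn π) * wtPos (List.ofFn (entry π)) else 0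

/-- Summation over rank `n + 1` as a sum over rank `n` and all insertions of `±(n+1)`, for a weight
`g` of the word which vanishes on words with double descents. -/
theorem sum_succ (n : ℕ) (g : List ℤ → ℤ[X]) (hg : ∀ l, ¬ noDD (0 :: l) = true → g l = 0) :
    (∑ π : SignedPerm (n + 1), if IsSimsun π then C (sgn π) * g (List.ofFn (entry π)) else 0)
    = ∑ π : SignedPerm n, if IsSimsun π then C (sgn π) *
      ∑ p ∈ range ((List.ofFn (entry π)).length + 1),
        (g ((List.ofFn (entry π)).insertIdx p (n + 1 : ℤ))
          - g ((List.ofFn (entry π)).insertIdx p (-(n + 1 : ℤ)))) else 0 := by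
  rw [← Function.Bijective.sum_comp ins_bijective, Fintype.sum_prod_type]
  refine sum_congr rfl fun π _ => ?_
  have hx : ∀ x : Fin (n + 1) × Bool, (if IsSimsun (ins (π, x)) then
      C (sgn (ins (π, x))) * g (List.ofFn (entry (ins (π, x)))) else 0) =
      if IsSimsun π then C (sgn π) * ((if x.2 then -1 else 1) *
        g ((List.ofFn (entry π)).insertIdx x.1 (sgnMax n x.2))) else 0 := by
    rintro ⟨p, s⟩
    simp only [isSimsun_ins]
    by_cases h1 : IsSimsun π
    · by_cases h2 : noDD (word (ins (π, p, s))) = true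
      · rw [if_pos ⟨h1, h2⟩, if_pos h1, ofFn_entry_ins, sgn_ins]
        cases s <;> simp
      · rw [if_neg (fun h => h2 h.2), if_pos h1, ← ofFn_entry_ins, hg _ h2]
        simp
    · rw [if_neg (fun h => h1 h.1), if_neg h1]
  rw [sum_congr rfl fun x _ => hx x]
  by_cases h1 : IsSimsun π
  · simp only [if_pos h1]
    rw [← mul_sum, Fintype.sum_prod_type, List.length_ofFn, sum_range]
    congr 1
    refine sum_congr rfl fun p _ => ?_
    simp [sgnMax]
    ring
  · simp [h1]

theorem P_succ (n : ℕ) : P (n + 1) = S n := by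
  unfold P S
  rw [sum_succ n wtPos (fun l h => by simp [wtPos, wt, h])]
  refine sum_congr rfl fun π _ => ?_
  split_ifs with h
  · rw [sum_insert_pos _ (by positivity) _ (entry_bound π) (noDD_word h)]
    rfl
  · rfl

theorem S_succ (n : ℕ) : S (n + 1) = S n - X * P n := by
  have h0 : S (n + 1) = ∑ π : SignedPerm (n + 1), if IsSimsun π then
    C (sgn π) * (fun l => wt (0 :: l)) (List.ofFn (entry π)) else 0 := rfl
  rw [h0, sum_succ n (fun l => wt (0 :: l)) (fun l h => by simp [wt, h])]
  unfold S P
  rw [mul_sum, ← sum_sub_distrib]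
  refine sum_congr rfl fun π _ => ?_
  split_ifs with h
  · rw [sum_insert _ _ _ (by omega) (by positivity) (entry_bound π) (noDD_word h)]
    simp only [wtPos, word, ← not_lt (b := (0 : ℤ))]
    split_ifs <;> simp
    ring
  · simp

theorem S_zero : S 0 = 1 := by
  have h : IsSimsun (default : SignedPerm 0) := by decide
  unfold S
  rw [Fintype.sum_eq_single default (fun x hx => absurd (Subsingleton.elim x default) hx), if_pos h]
  simp [sgn, word, wt_single]

theorem P_zero : P 0 = 1 := by
  have h : IsSimsun (default : SignedPerm 0) := by decide
  unfold P
  rw [Fintype.sum_eq_single default (fun x hx => absurd (Subsingleton.elim x default) hx), if_pos h]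
  simp [sgn, wtPos, wt_single]

theorem coeff_SP (n : ℕ) : (∀ k, (S n).coeff k = (-1) ^ k * ((n + 1 - k).choose k : ℤ)) ∧
    ∀ k, (P n).coeff k = (-1) ^ k * ((n - k).choose k : ℤ) := by
  induction n with
  | zero =>
    rw [S_zero, P_zero]
    constructor
    · intro k
      match k with
      | 0 => simp
      | 1 => simp [coeff_one]
      | k + 2 => simp [coeff_one]
    · intro k
      cases k <;> simp [coeff_one]
  | succ n ih =>
    obtain ⟨ihS, ihP⟩ := ih
    refine ⟨fun k => ?_, fun k => ?_⟩
    · rw [S_succ, coeff_sub, ihS]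
      cases k with
      | zero => simp
      | succ k =>
        rw [coeff_X_mul, ihP]
        rcases Nat.lt_or_ge n k with h | h
        · have h1 : n + 1 - (k + 1) = 0 := by omega
          have h2 : n + 1 + 1 - (k + 1) = 0 := by omega
          have h3 : n - k = 0 := by omega
          have hk : k ≠ 0 := by omega
          obtain ⟨m, rfl⟩ := Nat.exists_eq_succ_of_ne_zero hk
          simp [h1, h2, h3]
        · have h1 : n + 1 - (k + 1) = n - k := by omega
          have h2 : n + 1 + 1 - (k + 1) = (n - k) + 1 := by omega
          rw [h1, h2, Nat.choose_succ_succ]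
          push_cast
          ring
    · rw [P_succ, ihS]

/-! ### Comparison with the counting functions -/

theorem desL_eq : ∀ (l : List ℤ) (a : ℤ), desL (a :: l) =
    ((range l.length).filter (fun i => (a :: l).getD (i + 1) 0 < (a :: l).getD i 0)).card := by
  intro l
  induction l with
  | nil => intro a; simp [desL]
  | cons b l ih =>
    intro a
    rw [card_filter, List.length_cons, sum_range_succ', desL, ih, card_filter]
    rw [add_comm]
    simp

theorem wordFn_eq {n : ℕ} (π : SignedPerm n) (i : ℕ) : wordFn π i = (word π).getD i 0 := by
  unfold wordFn word
  cases i with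
  | zero => simp
  | succ i =>
    by_cases h : i < n
    · rw [dif_pos (by omega)]
      simp [List.getD_eq_getElem?_getD, h]
    · rw [dif_neg (by omega)]
      simp [List.getD_eq_getElem?_getD, h]

theorem desB_eq {n : ℕ} (π : SignedPerm n) : desB π = desL (word π) := by
  unfold desB
  simp only [wordFn_eq]
  unfold word
  rw [desL_eq, List.length_ofFn]

theorem sgn_eq {n : ℕ} (π : SignedPerm n) : sgn π = if IsEvenSigned π then 1 else -1 := by
  unfold sgn IsEvenSigned
  rw [prod_ite]
  simp only [prod_const, one_pow, mul_one, ← Nat.even_iff]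
  split_ifs with h
  · exact h.neg_one_pow
  · exact (Nat.not_even_iff_odd.mp h).neg_one_pow

theorem coeff_S (n k : ℕ) : (S n).coeff k = Dcnt n k - Tcnt n k := by
  unfold S Dcnt Tcnt RD RT RB
  rw [finsetSum_coeff]
  simp only [card_filter, filter_filter, Nat.cast_sum]
  rw [← sum_sub_distrib]
  refine sum_congr rfl fun π _ => ?_
  by_cases h : IsSimsun π
  · have := noDD_word h
    simp only [h, if_true, coeff_C_mul, wt, this, coeff_X_pow, sgn_eq, desB_eq]
    by_cases h1 : IsEvenSigned π <;> by_cases h2 : k = desL (word π) <;>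
      simp [h1, h2, eq_comm]
  · simp [h]

theorem Rcnt_eq (n : ℕ) (k : ℤ) : Rcnt n k = Dcnt n k + Tcnt n k := by
  unfold Rcnt Dcnt Tcnt RD RT
  rw [← card_filter_add_card_filter_not (s := (RB n).filter fun π => (desB π : ℤ) = k)
    (p := IsEvenSigned)]
  push_cast
  simp only [filter_filter, and_comm]

/-- `2·D(n,k) = R(n,k) + (−1)^k C(n−k+1,k)` and `2·T(n,k) = R(n,k) − (−1)^k C(n−k+1,k)`. -/
theorem stmt17 (n k : ℕ) :
    2 * Dcnt n k = Rcnt n k + (-1 : ℤ) ^ k * ((n + 1 - k).choose k : ℤ) ∧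
      2 * Tcnt n k = Rcnt n k - (-1 : ℤ) ^ k * ((n + 1 - k).choose k : ℤ) := by
  have h1 := coeff_S n k
  have h2 := Rcnt_eq n k
  rw [(coeff_SP n).1 k] at h1
  constructor <;> linarith
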